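/- arXiv:1410.2499 — 2 statements merged into one kernel-verified Lean document; each statement's English description precedes it below -/
import Mathlib

section
/- For any step of the nonsmooth Newmark scheme with γ = 2β = 1/2, the total mechanical energy changes only by the work of the external forces, the damping forces and the contact impulses: E(q_{k+1},v_{k+1}) − E(q_k,v_k) − W_ext − W_damp = U_{k+1/2}ᵀ P_{k+1}. -/
/-!
For arbitrary `γ` and `β`, write `Δ` for the increment over the step,
`xᵧ = γ x' + (1 - γ) x` for the weighted means and `U` for the mean local velocity. The scheme gives
`Δv = h aᵧ + w` and, up to a term proportional to `(2β - γ) Δa`, the trapezoidal rule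
`Δq = (h / 2) (v + v')`. Factoring the kinetic energy increment as `½ (v + v')ᵀ M Δv` therefore
yields `Δqᵀ M aᵧ + Uᵀ P` up to that term. The weighted balance of momentum turns `M aᵧ` into
`Fᵧ - K qᵧ - C vᵧ`. Finally, `Δqᵀ K qᵧ` is the increment of the elastic energy up to
`(1/2 - γ) Δqᵀ K Δq`, because `qᵧ` differs from the midpoint of `q` and `q'` by `(γ - 1/2) Δq`.
Both error terms vanish when `γ = 2β = 1/2`.
-/

open Matrix

open AffineMap (lineMap)

namespace NonsmoothNewmark

section Kinematics

lemma velocity_sub_eq {R E : Type*} [CommRing R] [AddCommGroup E] [Module R E]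
    {h γ : R} {v v' a a' w : E}
    (hv : v' = v + (h * (1 - γ)) • a + (h * γ) • a' + w) :
    v' - v = h • lineMap a a' γ + w := by
  rw [hv, AffineMap.lineMap_apply_module]
  module

variable {𝕜 E : Type*} [Field 𝕜] [NeZero (2 : 𝕜)] [AddCommGroup E] [Module 𝕜 E]

lemma lineMap_one_half_eq (x x' : E) :
    lineMap x x' (1 / 2 : 𝕜) = (1 / 2 : 𝕜) • x' + (1 / 2 : 𝕜) • x := by
  rw [AffineMap.lineMap_apply_module, sub_half, add_comm]

lemma displacement_sub_eq {h γ β : 𝕜} {q q' v v' a a' w : E}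
    (hv : v' = v + (h * (1 - γ)) • a + (h * γ) • a' + w)
    (hq : q' = q + h • v + (h ^ 2 * (1 / 2 - β)) • a + (h ^ 2 * β) • a' + (h / 2) • w) :
    q' - q = (h / 2) • (v + v') + (h ^ 2 / 2 * (2 * β - γ)) • (a' - a) := by
  rw [hq, hv]
  match_scalars <;> field_simp <;> ring

end Kinematics

section SymmetricForm

variable {R n : Type*} [CommRing R] [Fintype n] {A : Matrix n n R}

lemma dotProduct_mulVec_comm (hA : A.IsSymm) (x y : n → R) :
    x ⬝ᵥ A *ᵥ y = y ⬝ᵥ A *ᵥ x := by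
  rw [← dotProduct_transpose_mulVec, hA.eq]

lemma dotProduct_mulVec_self_sub (hA : A.IsSymm) (x x' : n → R) :
    x' ⬝ᵥ A *ᵥ x' - x ⬝ᵥ A *ᵥ x = (x + x') ⬝ᵥ A *ᵥ (x' - x) := by
  simp only [mulVec_sub, add_dotProduct, dotProduct_sub, dotProduct_mulVec_comm hA x' x]
  ring

end SymmetricForm

section Energy

lemma mulVec_lineMap_eq_of_balance {R n : Type*} [CommRing R] [Fintype n]
    {M K C : Matrix n n R} {q q' v v' a a' F F' : n → R}
    (hbal : M *ᵥ a + K *ᵥ q + C *ᵥ v = F)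
    (hbal' : M *ᵥ a' + K *ᵥ q' + C *ᵥ v' = F') (γ : R) :
    M *ᵥ lineMap a a' γ =
      lineMap F F' γ - K *ᵥ lineMap q q' γ - C *ᵥ lineMap v v' γ := by
  simp only [← hbal, ← hbal', AffineMap.lineMap_apply_module, mulVec_add, mulVec_smul]
  module

variable {𝕜 n m : Type*} [Field 𝕜] [NeZero (2 : 𝕜)] [Fintype n] [Fintype m]

lemma elasticEnergy_sub_eq {K : Matrix n n 𝕜} (hK : K.IsSymm)
    (q q' : n → 𝕜) (γ : 𝕜) :
    1 / 2 * (q' ⬝ᵥ K *ᵥ q') - 1 / 2 * (q ⬝ᵥ K *ᵥ q) =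
      (q' - q) ⬝ᵥ K *ᵥ lineMap q q' γ + (1 / 2 - γ) * ((q' - q) ⬝ᵥ K *ᵥ (q' - q)) := by
  have midpoint_eq : (1 / 2 : 𝕜) • (q + q') = lineMap q q' γ + (1 / 2 - γ) • (q' - q) := by
    rw [AffineMap.lineMap_apply_module]
    match_scalars <;> field_simp <;> ring
  calc 1 / 2 * (q' ⬝ᵥ K *ᵥ q') - 1 / 2 * (q ⬝ᵥ K *ᵥ q)
    _ = ((1 / 2 : 𝕜) • (q + q')) ⬝ᵥ K *ᵥ (q' - q) := by
      rw [← mul_sub, dotProduct_mulVec_self_sub hK, smul_dotProduct, smul_eq_mul]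
    _ = (q' - q) ⬝ᵥ K *ᵥ ((1 / 2 : 𝕜) • (q + q')) :=
      dotProduct_mulVec_comm hK _ _
    _ = _ := by
      rw [midpoint_eq, mulVec_add, mulVec_smul, dotProduct_add, dotProduct_smul, smul_eq_mul]

lemma kineticEnergy_sub_eq {h γ β : 𝕜} {M : Matrix n n 𝕜} {G : Matrix n m 𝕜}
    (hM : M.IsSymm) {q q' v v' a a' w : n → 𝕜} {P : m → 𝕜} (hw : M *ᵥ w = G *ᵥ P)
    (hv : v' = v + (h * (1 - γ)) • a + (h * γ) • a' + w)
    (hq : q' = q + h • v + (h ^ 2 * (1 / 2 - β)) • a + (h ^ 2 * β) • a' + (h / 2) • w) :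
    1 / 2 * (v' ⬝ᵥ M *ᵥ v') - 1 / 2 * (v ⬝ᵥ M *ᵥ v) =
      (q' - q) ⬝ᵥ M *ᵥ lineMap a a' γ
        - h ^ 2 / 2 * (2 * β - γ) * ((a' - a) ⬝ᵥ M *ᵥ lineMap a a' γ)
        + ((1 / 2 : 𝕜) • (Gᵀ *ᵥ v + Gᵀ *ᵥ v')) ⬝ᵥ P := by
  have momentum : M *ᵥ (v' - v) = h • M *ᵥ lineMap a a' γ + G *ᵥ P := by
    rw [velocity_sub_eq hv, mulVec_add, mulVec_smul, hw]
  have contact_work : (v + v') ⬝ᵥ G *ᵥ P = (Gᵀ *ᵥ v + Gᵀ *ᵥ v') ⬝ᵥ P := by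
    rw [← dotProduct_transpose_mulVec, mulVec_add, dotProduct_comm]
  rw [← mul_sub, dotProduct_mulVec_self_sub hM, momentum, dotProduct_add, contact_work,
    displacement_sub_eq hv hq]
  simp only [add_dotProduct, smul_dotProduct, dotProduct_smul, smul_eq_mul]
  ring

end Energy

end NonsmoothNewmark

open NonsmoothNewmark

theorem nonsmooth_newmark_energy_balance_midpoint_general
    {𝕜 n m : Type*} [Field 𝕜] [NeZero (2 : 𝕜)] [Fintype n] [Fintype m] {h γ β : 𝕜}
    {M K C : Matrix n n 𝕜} {G : Matrix n m 𝕜} (hM : M.IsSymm) (hK : K.IsSymm)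
    {q q' v v' a a' w F F' : n → 𝕜} {P : m → 𝕜}
    (hbal : M *ᵥ a + K *ᵥ q + C *ᵥ v = F)
    (hbal' : M *ᵥ a' + K *ᵥ q' + C *ᵥ v' = F')
    (hw : M *ᵥ w = G *ᵥ P)
    (hv : v' = v + (h * (1 - γ)) • a + (h * γ) • a' + w)
    (hq : q' = q + h • v + (h ^ 2 * (1 / 2 - β)) • a + (h ^ 2 * β) • a' + (h / 2) • w) :
    (1 / 2 * (v' ⬝ᵥ M *ᵥ v') + 1 / 2 * (q' ⬝ᵥ K *ᵥ q'))
      - (1 / 2 * (v ⬝ᵥ M *ᵥ v) + 1 / 2 * (q ⬝ᵥ K *ᵥ q))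
      - (q' - q) ⬝ᵥ lineMap F F' γ
      - (-((q' - q) ⬝ᵥ C *ᵥ lineMap v v' γ))
    = ((1 / 2 : 𝕜) • (Gᵀ *ᵥ v + Gᵀ *ᵥ v')) ⬝ᵥ P
      + (1 / 2 - γ) * ((q' - q) ⬝ᵥ K *ᵥ (q' - q))
      - h ^ 2 / 2 * (2 * β - γ) * ((a' - a) ⬝ᵥ M *ᵥ lineMap a a' γ) := by
  have inertial_work : (q' - q) ⬝ᵥ M *ᵥ lineMap a a' γ =
      (q' - q) ⬝ᵥ lineMap F F' γ - (q' - q) ⬝ᵥ K *ᵥ lineMap q q' γ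
        - (q' - q) ⬝ᵥ C *ᵥ lineMap v v' γ := by
    rw [mulVec_lineMap_eq_of_balance hbal hbal', dotProduct_sub, dotProduct_sub]
  linear_combination kineticEnergy_sub_eq hM hw hv hq + elasticEnergy_sub_eq hK q q' γ
    + inertial_work

/-- For `γ = 2β = 1/2`, the total mechanical energy of the nonsmooth Newmark
scheme changes only by the works of the external forces, damping forces and
contact impulses. -/
theorem nonsmooth_newmark_energy_balance_midpoint
    (n m : ℕ) (hn : 1 ≤ n) (hm : 1 ≤ m)
    (h : ℝ) (hh : 0 < h)
    (M K C : Matrix (Fin n) (Fin n) ℝ) (G : Matrix (Fin n) (Fin m) ℝ)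
    (hM : M.PosDef) (hK : K.PosSemidef)
    (qk qk1 vk vk1 ak ak1 w Fk Fk1 : Fin n → ℝ) (P : Fin m → ℝ)
    (hbalk : M.mulVec ak + K.mulVec qk + C.mulVec vk = Fk)
    (hbalk1 : M.mulVec ak1 + K.mulVec qk1 + C.mulVec vk1 = Fk1)
    (hw : M.mulVec w = G.mulVec P)
    (hv : vk1 = vk + (h * (1 - (1/2 : ℝ))) • ak + (h * (1/2 : ℝ)) • ak1 + w)
    (hq : qk1 = qk + h • vk + (h ^ 2 * (1/2 - (1/4 : ℝ))) • ak
        + (h ^ 2 * (1/4 : ℝ)) • ak1 + (h / 2) • w) :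
    (1/2 * (vk1 ⬝ᵥ M.mulVec vk1) + 1/2 * (qk1 ⬝ᵥ K.mulVec qk1))
      - (1/2 * (vk ⬝ᵥ M.mulVec vk) + 1/2 * (qk ⬝ᵥ K.mulVec qk))
      - (qk1 - qk) ⬝ᵥ ((1/2 : ℝ) • Fk1 + (1/2 : ℝ) • Fk)
      - (-((qk1 - qk) ⬝ᵥ C.mulVec ((1/2 : ℝ) • vk1 + (1/2 : ℝ) • vk)))
    = ((1/2 : ℝ) • (Gᵀ.mulVec vk + Gᵀ.mulVec vk1)) ⬝ᵥ P := by
  rw [← lineMap_one_half_eq, ← lineMap_one_half_eq]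
  linear_combination nonsmooth_newmark_energy_balance_midpoint_general
    (isHermitian_iff_isSymm.mp hM.isHermitian) (isHermitian_iff_isSymm.mp hK.isHermitian)
    hbalk hbalk1 hw hv hq
end

section
/- (Thomson–Tait formula for an impact.) The work done by the contact impulse during an impact, W_impact = (1/2)(v⁺ + v⁻)ᵀ G P, satisfies W_impact = (1/2)(U⁺ + U⁻)ᵀ P = (1/2) Σ_α (1 − e^α) U⁻^α P^α ≤ 0, where U^± = Gᵀ v^±. -/
open Matrix BigOperators

section Restitution

variable {κ R : Type*} [Fintype κ] [CommRing R] {u w p e : κ → R}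

theorem add_dotProduct_eq_sum_of_restitution (h : ∀ α, p α ≠ 0 → w α = -e α * u α) :
    (w + u) ⬝ᵥ p = ∑ α, (1 - e α) * u α * p α := by
  refine Finset.sum_congr rfl fun α _ => ?_
  rcases eq_or_ne (p α) 0 with hpα | hpα
  · simp [hpα]
  · rw [Pi.add_apply, h α hpα]
    ring

theorem sum_one_sub_mul_mul_nonpos [PartialOrder R] [IsOrderedRing R] (hp : ∀ α, 0 ≤ p α)
    (he : ∀ α, 0 < p α → e α ≤ 1) (hu : ∀ α, 0 < p α → u α ≤ 0) :
    ∑ α, (1 - e α) * u α * p α ≤ 0 := by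
  refine Finset.sum_nonpos fun α _ => ?_
  rcases (hp α).eq_or_lt with hpα | hpα
  · simp [← hpα]
  · exact mul_nonpos_of_nonpos_of_nonneg
      (mul_nonpos_of_nonneg_of_nonpos (sub_nonneg.2 (he α hpα)) (hu α hpα)) hpα.le

end Restitution

theorem thomson_tait_impact_work_general {ι κ K : Type*} [Fintype ι] [Fintype κ]
    [Field K] [LinearOrder K] [IsStrictOrderedRing K]
    (G : Matrix ι κ K) (vm vp : ι → K) (P e : κ → K)
    (hP : ∀ α, 0 ≤ P α)
    (hnewton : ∀ α, 0 < P α →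
      e α ≤ 1 ∧ Gᵀ.mulVec vp α = -(e α) * Gᵀ.mulVec vm α ∧ Gᵀ.mulVec vm α ≤ 0) :
    (1/2 : K) * ((vp + vm) ⬝ᵥ G.mulVec P)
      = (1/2 : K) * ((Gᵀ.mulVec vp + Gᵀ.mulVec vm) ⬝ᵥ P)
    ∧ (1/2 : K) * ((vp + vm) ⬝ᵥ G.mulVec P)
      = (1/2 : K) * ∑ α, (1 - e α) * Gᵀ.mulVec vm α * P α
    ∧ (1/2 : K) * ((vp + vm) ⬝ᵥ G.mulVec P) ≤ 0 := by
  have work_eq_contact : (vp + vm) ⬝ᵥ G.mulVec P = (Gᵀ.mulVec vp + Gᵀ.mulVec vm) ⬝ᵥ P := by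
    rw [dotProduct_mulVec, ← mulVec_transpose, mulVec_add]
  have contact_eq_sum : (Gᵀ.mulVec vp + Gᵀ.mulVec vm) ⬝ᵥ P
      = ∑ α, (1 - e α) * Gᵀ.mulVec vm α * P α :=
    add_dotProduct_eq_sum_of_restitution fun α hα => (hnewton α ((hP α).lt_of_ne' hα)).2.1
  have sum_nonpos : ∑ α, (1 - e α) * Gᵀ.mulVec vm α * P α ≤ 0 :=
    sum_one_sub_mul_mul_nonpos hP (fun α hα => (hnewton α hα).1) fun α hα => (hnewton α hα).2.2
  rw [work_eq_contact, contact_eq_sum]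
  exact ⟨rfl, rfl, mul_nonpos_of_nonneg_of_nonpos one_half_pos.le sum_nonpos⟩

/-- Thomson–Tait formula: the work done by the contact impulse during an impact
satisfying Newton's impact law is nonpositive. -/
theorem thomson_tait_impact_work
    (n m : ℕ) (hn : 1 ≤ n) (hm : 1 ≤ m)
    (G : Matrix (Fin n) (Fin m) ℝ)
    (vm vp : Fin n → ℝ) (P : Fin m → ℝ) (e : Fin m → ℝ)
    (hP : ∀ α, 0 ≤ P α)
    (hnewton : ∀ α, 0 < P α →
      0 ≤ e α ∧ e α ≤ 1
        ∧ Gᵀ.mulVec vp α = -(e α) * Gᵀ.mulVec vm α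
        ∧ Gᵀ.mulVec vm α ≤ 0) :
    (1/2 : ℝ) * ((vp + vm) ⬝ᵥ G.mulVec P)
      = (1/2 : ℝ) * ((Gᵀ.mulVec vp + Gᵀ.mulVec vm) ⬝ᵥ P)
    ∧ (1/2 : ℝ) * ((vp + vm) ⬝ᵥ G.mulVec P)
      = (1/2 : ℝ) * ∑ α, (1 - e α) * Gᵀ.mulVec vm α * P α
    ∧ (1/2 : ℝ) * ((vp + vm) ⬝ᵥ G.mulVec P) ≤ 0 :=
  thomson_tait_impact_work_general G vm vp P e hP fun α hα => (hnewton α hα).2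
end
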